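/- arXiv:1501.01389 — 2 statements merged into one kernel-verified Lean document; each statement's English description precedes it below -/
import Mathlib

section
/- Let C and D be abelian categories, let G : C ⥤ D be an additive functor admitting a left adjoint F : D ⥤ C, and suppose that F is exact and resolving. Then for every n ∈ ℕ and all objects X, Y of C there is an isomorphism of abelian groups Ext^n_C(F(G(X)), Y) ≅ Ext^n_D(G(X), G(Y)). -/
open CategoryTheory Limits

universe w v u v' u'

namespace ExtAdj

open Abelian

variable {C : Type u} [Category.{v} C] [Abelian C] [HasExt.{w} C]
  {D : Type u'} [Category.{v'} D] [Abelian D] [HasExt.{w} D]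
  {G : C ⥤ D} {F : D ⥤ C} [F.Additive]
  [PreservesFiniteLimits F] [PreservesFiniteColimits F]

/-- The comparison map `Ext^n_D(Z, G Y) → Ext^n_C(F Z, Y)`. -/
noncomputable def phi (adj : F ⊣ G) (Y : C) (Z : D) (n : ℕ) :
    Ext.{w} Z (G.obj Y) n →+ Ext.{w} (F.obj Z) Y n :=
  ((Ext.mk₀ (adj.counit.app Y)).postcomp (F.obj Z) (add_zero n)).comp
    (F.mapExtAddHom Z (G.obj Y) n)

lemma phi_apply (adj : F ⊣ G) (Y : C) (Z : D) (n : ℕ) (e : Ext.{w} Z (G.obj Y) n) :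
    phi adj Y Z n e =
      (e.mapExactFunctor F).comp (Ext.mk₀ (adj.counit.app Y)) (add_zero n) := rfl

lemma phi_comp (adj : F ⊣ G) (Y : C) {Z Z' : D} {a n m : ℕ} (x : Ext.{w} Z' Z a)
    (e : Ext.{w} Z (G.obj Y) n) (h : a + n = m) :
    phi adj Y Z' m (x.comp e h) = (x.mapExactFunctor F).comp (phi adj Y Z n e) h := by
  rw [phi_apply, phi_apply, Ext.mapExactFunctor_comp]
  exact Ext.comp_assoc _ _ _ _ _ (by omega)

lemma phi_bijective (adj : F ⊣ G)
    (hres : ∀ Z : D, ∃ (P : D) (p : P ⟶ Z),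
      Epi p ∧ Projective P ∧ Projective (F.obj P))
    (Y : C) (Z : D) (n : ℕ) : Function.Bijective (phi.{w} adj Y Z n) := by
  induction n generalizing Z with
  | zero =>
    have key : ∀ f : Z ⟶ G.obj Y, phi.{w} adj Y Z 0 (Ext.mk₀ f) =
        Ext.mk₀ ((adj.homEquiv Z Y).symm f) := by
      intro f
      rw [phi_apply, Ext.mapExactFunctor_mk₀, Ext.mk₀_comp_mk₀, adj.homEquiv_counit]
    have h : (phi.{w} adj Y Z 0 : _ → _) ∘ Ext.mk₀ =
        Ext.mk₀ ∘ (adj.homEquiv Z Y).symm := funext key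
    rw [← Function.Bijective.of_comp_iff _ (Ext.mk₀_bijective Z (G.obj Y)), h]
    exact (Ext.mk₀_bijective _ _).comp (Equiv.bijective _)
  | succ n hn =>
    obtain ⟨P, p, hp, hP, hFP⟩ := hres Z
    let S := ShortComplex.mk _ _ (kernel.condition p)
    have : Projective S.X₂ := hP
    have : Projective (S.map F).X₂ := hFP
    have hS : S.ShortExact := { exact := ShortComplex.exact_kernel p }
    have hFS : (S.map F).ShortExact := hS.map_of_exact F
    have s1 := Ext.subsingleton_of_projective.{w} S.X₂ (G.obj Y) n
    have s2 := Ext.subsingleton_of_projective.{w} (S.map F).X₂ Y n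
    exact AddMonoidHom.bijective_of_surjective_of_bijective_of_right_exact _ _ _ _
      (phi adj Y S.X₂ n) (phi adj Y S.X₁ n) (phi adj Y S.X₃ (n + 1))
      (by
        ext x
        refine (Eq.symm ?_)
        refine (phi_comp adj Y (Ext.mk₀ S.f) x (zero_add n)).trans ?_
        rw [Ext.mapExactFunctor_mk₀]; rfl)
      (by
        ext x
        refine (Eq.symm ?_)
        refine (phi_comp adj Y hS.extClass x (add_comm 1 n)).trans ?_
        rw [Ext.mapExactFunctor_extClass]; rfl)
      ((ShortComplex.ab_exact_iff_function_exact _).1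
        (Ext.contravariant_sequence_exact₁' hS (G.obj Y) n (n + 1) (add_comm 1 n)))
      ((ShortComplex.ab_exact_iff_function_exact _).1
        (Ext.contravariant_sequence_exact₁' hFS Y n (n + 1) (add_comm 1 n)))
      (hn _).surjective (hn _)
      (fun x₃ ↦ Ext.contravariant_sequence_exact₃ hS _ x₃ (by subsingleton) (add_comm 1 n))
      (fun y₃ ↦ Ext.contravariant_sequence_exact₃ hFS _ y₃ (by subsingleton) (add_comm 1 n))

end ExtAdj

/-- If `G : C ⥤ D` is an additive functor between abelian categories
admitting a left adjoint `F : D ⥤ C` which is exact and resolving, then for every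
`n : ℕ` and objects `X Y : C` there is an isomorphism of abelian groups
`Ext^n_C(F(G(X)), Y) ≅ Ext^n_D(G(X), G(Y))`. -/
theorem statement0
    {C : Type u} [Category.{v} C] [Abelian C] [HasExt.{w} C]
    {D : Type u'} [Category.{v'} D] [Abelian D] [HasExt.{w} D]
    (G : C ⥤ D) [G.Additive] (F : D ⥤ C) (adj : F ⊣ G)
    [PreservesFiniteLimits F] [PreservesFiniteColimits F]
    (hres : ∀ Z : D, ∃ (P : D) (p : P ⟶ Z),
      Epi p ∧ Projective P ∧ Projective (F.obj P))
    (n : ℕ) (X Y : C) :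
    Nonempty (Abelian.Ext (F.obj (G.obj X)) Y n ≃+ Abelian.Ext (G.obj X) (G.obj Y) n) := by
  have : F.Additive := adj.left_adjoint_additive
  exact ⟨(AddEquiv.ofBijective _ (ExtAdj.phi_bijective adj hres Y (G.obj X) n)).symm⟩
end

section
/- The following are equivalent for objects X, W of C: (a) Sha^1(X, W) = 0, i.e. the map ε_X^* : Ext^1_C(X, W) → Ext^1_C(T X, W) is injective; (b) for every short exact sequence 0 → W → E → X → 0 in C, the sequence admits a splitting (the monomorphism W → E admits a retraction) if and only if, for every i ∈ I, its image 0 → G_i(W) → G_i(E) → G_i(X) → 0 under G_i admits a splitting in C_i. -/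
open CategoryTheory Limits

attribute [local instance] CategoryTheory.Abelian.hasFiniteBiproducts

universe w v u v' u'

variable {C : Type u} [Category.{v} C] [Abelian C]
variable {I : Type} [Fintype I]
variable {Ci : I → Type u'} [∀ i, Category.{v'} (Ci i)] [∀ i, Abelian (Ci i)]

/-- The biproduct `T X = ⊕_{i ∈ I} F_i (G_i X)`. -/
noncomputable def T (F : ∀ i, Ci i ⥤ C) (G : ∀ i, C ⥤ Ci i) (X : C) : C :=
  ⨁ (fun i => (F i).obj ((G i).obj X))

/-- The canonical map `ε_X : T X ⟶ X` whose component on `F_i (G_i X)` is the counit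
of the adjunction `F_i ⊣ G_i` at `X`. -/
noncomputable def eps (F : ∀ i, Ci i ⥤ C) (G : ∀ i, C ⥤ Ci i)
    (adj : ∀ i, F i ⊣ G i) (X : C) : T F G X ⟶ X :=
  biproduct.desc (fun i => (adj i).counit.app X)

open Pretriangulated DerivedCategory in
/-- Every degree-one extension class comes from a short exact sequence. -/
lemma exists_extClass_eq [HasExt.{w} C] {X W : C} (e : Abelian.Ext.{w} X W 1) :
    ∃ (E : C) (ι : W ⟶ E) (π : E ⟶ X) (hw : ι ≫ π = 0)
      (hS : (ShortComplex.mk ι π hw).ShortExact), hS.extClass = e := by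
  let _ := HasDerivedCategory.standard C
  let h : (singleFunctor C 0).obj X ⟶ ((singleFunctor C 0).obj W)⟦(1 : ℤ)⟧ := e.hom
  obtain ⟨Y, f, g, hT⟩ := distinguished_cocone_triangle₂ h
  have hLE : Y.IsLE 0 := TStructure.t.isLE₂ _ hT 0
    (inferInstanceAs (((singleFunctor C 0).obj W).IsLE 0))
    (inferInstanceAs (((singleFunctor C 0).obj X).IsLE 0))
  have hGE : Y.IsGE 0 := TStructure.t.isGE₂ _ hT 0
    (inferInstanceAs (((singleFunctor C 0).obj W).IsGE 0))
    (inferInstanceAs (((singleFunctor C 0).obj X).IsGE 0))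
  obtain ⟨E, ⟨iso⟩⟩ := exists_iso_singleFunctor_obj_of_isGE_of_isLE Y 0
  obtain ⟨ι, hι⟩ := (singleFunctor C 0).map_surjective (f ≫ iso.hom)
  obtain ⟨π, hπ⟩ := (singleFunctor C 0).map_surjective (iso.inv ≫ g)
  have hT' : Triangle.mk ((singleFunctor C 0).map ι) ((singleFunctor C 0).map π) h ∈
      distTriang (DerivedCategory C) := by
    refine isomorphic_distinguished _ hT _ (Triangle.isoMk _ _ (Iso.refl _) iso.symm (Iso.refl _)
      ?_ ?_ ?_)
    · change (singleFunctor C 0).map ι ≫ iso.inv = 𝟙 _ ≫ f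
      rw [hι]
      simp
    · change (singleFunctor C 0).map π ≫ 𝟙 _ = iso.inv ≫ g
      rw [hπ]
      simp
    · change h ≫ (𝟙 _)⟦(1 : ℤ)⟧' = 𝟙 _ ≫ h
      simp
  have ex₁ : ∀ {A : DerivedCategory C} (k : A ⟶ ((singleFunctor C 0).obj W)⟦(1 : ℤ)⟧),
      k ≫ ((singleFunctor C 0).map ι)⟦(1 : ℤ)⟧' = 0 →
      ∃ q : A ⟶ (singleFunctor C 0).obj X, k = q ≫ h :=
    fun k hk => Triangle.coyoneda_exact₁ _ hT' k hk
  have ex₂ : ∀ {A : DerivedCategory C} (k : A ⟶ (singleFunctor C 0).obj E),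
      k ≫ (singleFunctor C 0).map π = 0 →
      ∃ q : A ⟶ (singleFunctor C 0).obj W, k = q ≫ (singleFunctor C 0).map ι :=
    fun k hk => Triangle.coyoneda_exact₂ _ hT' k hk
  have ex₃ : ∀ {A : DerivedCategory C} (k : (singleFunctor C 0).obj X ⟶ A),
      (singleFunctor C 0).map π ≫ k = 0 →
      ∃ q : ((singleFunctor C 0).obj W)⟦(1 : ℤ)⟧ ⟶ A, k = h ≫ q :=
    fun k hk => Triangle.yoneda_exact₃ _ hT' k hk
  have hw : ι ≫ π = 0 := by
    apply (singleFunctor C 0).map_injective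
    have : (singleFunctor C 0).map ι ≫ (singleFunctor C 0).map π = 0 :=
      comp_distTriang_mor_zero₁₂ _ hT'
    simpa using this
  have hmono : Mono ι := by
    refine Preadditive.mono_of_cancel_zero _ (fun {Z} k hk => ?_)
    apply (singleFunctor C 0).map_injective
    apply (shiftFunctor (DerivedCategory C) (1 : ℤ)).map_injective
    obtain ⟨q, hq⟩ := ex₁
      (((singleFunctor C 0).map k)⟦(1 : ℤ)⟧') (by
        rw [← Functor.map_comp, ← Functor.map_comp, hk]
        simp)
    have hz : q = 0 := by
      have : TStructure.t.IsLE (((singleFunctor C 0).obj Z)⟦(1 : ℤ)⟧) (-1) :=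
        TStructure.t.isLE_shift _ 0 1 (-1)
      have : TStructure.t.IsGE ((singleFunctor C 0).obj X) 0 :=
        (inferInstanceAs (((singleFunctor C 0).obj X).IsGE 0))
      exact TStructure.t.zero q (-1) 0
    rw [hq, hz]
    simp
  have hepi : Epi π := by
    refine Preadditive.epi_of_cancel_zero _ (fun {Z} k hk => ?_)
    apply (singleFunctor C 0).map_injective
    obtain ⟨q, hq⟩ := ex₃ ((singleFunctor C 0).map k) (by
        rw [← Functor.map_comp, hk]
        simp)
    have hz : q = 0 := by
      have : TStructure.t.IsLE (((singleFunctor C 0).obj W)⟦(1 : ℤ)⟧) (-1) :=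
        TStructure.t.isLE_shift _ 0 1 (-1)
      have : TStructure.t.IsGE ((singleFunctor C 0).obj Z) 0 :=
        (inferInstanceAs (((singleFunctor C 0).obj Z).IsGE 0))
      exact TStructure.t.zero q (-1) 0
    rw [hq, hz]
    simp
  have hex : (ShortComplex.mk ι π hw).Exact := by
    apply ShortComplex.exact_of_f_is_kernel
    have key : ∀ {Z : C} (k : Z ⟶ E), k ≫ π = 0 → ∃ l : Z ⟶ W, l ≫ ι = k := by
      intro Z k hk
      obtain ⟨q, hq⟩ := ex₂ ((singleFunctor C 0).map k) (by
        rw [← Functor.map_comp, hk]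
        simp)
      obtain ⟨l, rfl⟩ := (singleFunctor C 0).map_surjective q
      refine ⟨l, (singleFunctor C 0).map_injective ?_⟩
      rw [hq]
      simp
    exact KernelFork.IsLimit.ofι' _ _ (fun k hk => ⟨(key k hk).choose, (key k hk).choose_spec⟩)
  have hS : (ShortComplex.mk ι π hw).ShortExact := ShortComplex.ShortExact.mk' hex hmono hepi
  refine ⟨E, ι, π, hw, hS, ?_⟩
  ext
  rw [hS.extClass_hom]
  obtain ⟨c, hc₁, hc₂⟩ : ∃ c : (singleFunctor C 0).obj X ⟶ (singleFunctor C 0).obj X,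
      (singleFunctor C 0).map π ≫ c = 𝟙 _ ≫ (singleFunctor C 0).map π ∧
      hS.singleδ ≫ (𝟙 ((singleFunctor C 0).obj W))⟦(1 : ℤ)⟧' = c ≫ h := by
    refine complete_distinguished_triangle_morphism _ _
      hS.singleTriangle_distinguished hT' (𝟙 _) (𝟙 _) ?_
    change (singleFunctor C 0).map ι ≫ 𝟙 _ = 𝟙 _ ≫ (singleFunctor C 0).map ι
    simp
  obtain ⟨c, rfl⟩ := (singleFunctor C 0).map_surjective c
  have hc : c = 𝟙 X := by
    rw [← cancel_epi π]
    apply (singleFunctor C 0).map_injective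
    simpa using hc₁
  subst hc
  have hc₃ : hS.singleδ = h := by simpa using hc₂
  exact hc₃

/-- A short exact sequence splits iff its extension class vanishes. -/
lemma extClass_eq_zero_iff [HasExt.{w} C] {S : ShortComplex C} (hS : S.ShortExact) :
    (hS.extClass : Abelian.Ext.{w} _ _ _) = 0 ↔ ∃ r : S.X₂ ⟶ S.X₁, S.f ≫ r = 𝟙 S.X₁ := by
  constructor
  · intro h
    obtain ⟨r, hr⟩ := Abelian.Ext.contravariant_sequence_exact₁ hS S.X₁
      (Abelian.Ext.mk₀ (𝟙 S.X₁)) (add_zero 1) (by rw [h, Abelian.Ext.zero_comp])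
    obtain ⟨r, rfl⟩ := (Abelian.Ext.mk₀_bijective _ _).2 r
    refine ⟨r, (Abelian.Ext.mk₀_bijective _ _).1 ?_⟩
    rw [← hr, Abelian.Ext.mk₀_comp_mk₀]
  · rintro ⟨r, hr⟩
    rw [← Abelian.Ext.comp_mk₀_id hS.extClass, ← hr, ← Abelian.Ext.mk₀_comp_mk₀,
      hS.extClass_comp_assoc]

/-- The pullback of an extension class vanishes iff the map lifts. -/
lemma mk₀_comp_extClass_eq_zero_iff [HasExt.{w} C] {S : ShortComplex C} (hS : S.ShortExact)
    {A : C} (a : A ⟶ S.X₃) :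
    (Abelian.Ext.mk₀ a).comp (hS.extClass : Abelian.Ext.{w} _ _ _) (zero_add 1) = 0 ↔
      ∃ s : A ⟶ S.X₂, s ≫ S.g = a := by
  constructor
  · intro h
    obtain ⟨s, hs⟩ := Abelian.Ext.covariant_sequence_exact₃ A hS (Abelian.Ext.mk₀ a) (zero_add 1) h
    obtain ⟨s, rfl⟩ := (Abelian.Ext.mk₀_bijective _ _).2 s
    refine ⟨s, (Abelian.Ext.mk₀_bijective _ _).1 ?_⟩
    rw [← hs, Abelian.Ext.mk₀_comp_mk₀]
  · rintro ⟨s, rfl⟩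
    rw [← Abelian.Ext.mk₀_comp_mk₀, Abelian.Ext.comp_assoc_of_second_deg_zero,
      hS.comp_extClass, Abelian.Ext.comp_zero]

lemma biproduct_lift_iff (Y : I → C) {X E : C} (π : E ⟶ X) (c : ∀ i, Y i ⟶ X) :
    (∃ s : ⨁ Y ⟶ E, s ≫ π = biproduct.desc c) ↔ ∀ i, ∃ s : Y i ⟶ E, s ≫ π = c i := by
  constructor
  · rintro ⟨s, hs⟩ i
    exact ⟨biproduct.ι Y i ≫ s, by rw [Category.assoc, hs, biproduct.ι_desc]⟩
  · intro h
    choose s hs using h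
    refine ⟨biproduct.desc s, ?_⟩
    refine biproduct.hom_ext' _ _ (fun i => ?_)
    rw [biproduct.ι_desc_assoc, hs, biproduct.ι_desc]

/-- The map `ε_X` lifts along `π` iff each image under `G_i` splits. -/
lemma eps_lift_iff (F : ∀ i, Ci i ⥤ C) (G : ∀ i, C ⥤ Ci i) (adj : ∀ i, F i ⊣ G i)
    [∀ i, (G i).Additive]
    [∀ i, PreservesFiniteLimits (G i)] [∀ i, PreservesFiniteColimits (G i)]
    {X W E : C} (ι : W ⟶ E) (π : E ⟶ X) (hw : ι ≫ π = 0)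
    (hS : (ShortComplex.mk ι π hw).ShortExact) :
    (∃ s : T F G X ⟶ E, s ≫ π = eps F G adj X) ↔
      ∀ i, ∃ r : (G i).obj E ⟶ (G i).obj W, (G i).map ι ≫ r = 𝟙 ((G i).obj W) := by
  have h1 : (∃ s : T F G X ⟶ E, s ≫ π = eps F G adj X) ↔
      ∀ i, ∃ s : (F i).obj ((G i).obj X) ⟶ E, s ≫ π = (adj i).counit.app X :=
    biproduct_lift_iff _ π _
  rw [h1]
  refine forall_congr' (fun i => ?_)
  have hG := hS.map_of_exact (G i)
  have := hG.mono_f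
  have := hG.epi_g
  constructor
  · rintro ⟨s, hs⟩
    let sp := ShortComplex.Splitting.ofExactOfSection _ hG.exact ((adj i).homEquiv _ _ s) (by
      change (adj i).homEquiv _ _ s ≫ (G i).map π = 𝟙 _
      rw [← Adjunction.homEquiv_naturality_right, hs]
      simp [Adjunction.homEquiv_unit]) hG.mono_f
    exact ⟨sp.r, sp.f_r⟩
  · rintro ⟨r, hr⟩
    let sp := ShortComplex.Splitting.ofExactOfRetraction _ hG.exact r hr hG.epi_g
    have hsg : sp.s ≫ (G i).map π = 𝟙 _ := sp.s_g
    let t : (G i).obj X ⟶ (G i).obj E := sp.s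
    have ht : t ≫ (G i).map π = 𝟙 _ := hsg
    refine ⟨((adj i).homEquiv _ _).symm t, ?_⟩
    rw [← Adjunction.homEquiv_naturality_right_symm, ht]
    simp [Adjunction.homEquiv_counit]

/-- `Sha¹(X, W) = 0` (i.e. `ε_X^* : Ext¹(X, W) → Ext¹(T X, W)` is injective)
if and only if every short exact sequence `0 → W → E → X → 0` in `C` splits exactly when
its image under each `G_i` splits in `C_i`. -/
theorem statement1 [HasExt.{w} C]
    (F : ∀ i, Ci i ⥤ C) (G : ∀ i, C ⥤ Ci i) (adj : ∀ i, F i ⊣ G i)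
    [∀ i, (G i).Additive] [∀ i, (G i).Faithful]
    [∀ i, PreservesFiniteLimits (G i)] [∀ i, PreservesFiniteColimits (G i)]
    [∀ i, PreservesFiniteLimits (F i)] [∀ i, PreservesFiniteColimits (F i)]
    (hres : ∀ i (Z : Ci i), ∃ (P : Ci i) (p : P ⟶ Z),
      Epi p ∧ Projective P ∧ Projective ((F i).obj P))
    (X W : C) :
    (Function.Injective fun e : Abelian.Ext X W 1 =>
        (Abelian.Ext.mk₀ (eps F G adj X)).comp e (zero_add 1)) ↔
      ∀ (E : C) (ι : W ⟶ E) (π : E ⟶ X) (hw : ι ≫ π = 0),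
        (ShortComplex.mk ι π hw).ShortExact →
          ((∃ r : E ⟶ W, ι ≫ r = 𝟙 W) ↔
            ∀ i, ∃ r : (G i).obj E ⟶ (G i).obj W, (G i).map ι ≫ r = 𝟙 ((G i).obj W)) := by
  constructor
  · intro hinj E ι π hw hS
    constructor
    · rintro ⟨r, hr⟩ i
      exact ⟨(G i).map r, by rw [← Functor.map_comp, hr, CategoryTheory.Functor.map_id]⟩
    · intro h
      refine (extClass_eq_zero_iff.{w} hS).1 (hinj ?_)
      change (Abelian.Ext.mk₀ (eps F G adj X)).comp hS.extClass _ =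
        (Abelian.Ext.mk₀ (eps F G adj X)).comp 0 _
      rw [Abelian.Ext.comp_zero]
      exact (mk₀_comp_extClass_eq_zero_iff.{w} hS _).2 ((eps_lift_iff F G adj ι π hw hS).2 h)
  · intro h
    have key : ∀ e : Abelian.Ext.{w} X W 1,
        (Abelian.Ext.mk₀ (eps F G adj X)).comp e (zero_add 1) = 0 → e = 0 := by
      intro e he
      obtain ⟨E, ι, π, hw, hS, rfl⟩ := exists_extClass_eq e
      exact (extClass_eq_zero_iff.{w} hS).2 ((h E ι π hw hS).2
        ((eps_lift_iff F G adj ι π hw hS).1 ((mk₀_comp_extClass_eq_zero_iff.{w} hS _).1 he)))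
    intro a b hab
    have hab' : (Abelian.Ext.mk₀ (eps F G adj X)).comp a (zero_add 1) =
      (Abelian.Ext.mk₀ (eps F G adj X)).comp b (zero_add 1) := hab
    rw [← sub_eq_zero]
    apply key
    rw [sub_eq_add_neg, Abelian.Ext.comp_add, Abelian.Ext.comp_neg, hab', add_neg_cancel]
end
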